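/- arXiv:2410.08135 — 3 statements merged into one kernel-verified Lean document; each statement's English description precedes it below -/
import Mathlib

section
/- Let p_1, …, p_K be distinct complex numbers, m_1, …, m_K positive integers, A an n×n complex matrix, B an n×m complex matrix, and let Φx(l,j) be n×n complex matrices and Φu(l,j) be m×n complex matrices for 1 ≤ l ≤ K, 1 ≤ j ≤ m_l. Define Φx(s) = Σ_{l=1}^K Σ_{j=1}^{m_l} Φx(l,j)/(s−p_l)^j and Φu(s) = Σ_{l=1}^K Σ_{j=1}^{m_l} Φu(l,j)/(s−p_l)^j. Then (sI−A)·Φx(s) − B·Φu(s) = I holds for every s ∈ ℂ with s ∉ {p_1,…,p_K} if and only if the following coefficient equations hold: Σ_{l=1}^K Φx(l,1) = I; Φx(l,j+1) + (p_l·I−A)·Φx(l,j) − B·Φu(l,j) = 0 for every l ∈ {1,…,K} and j ∈ {1,…,m_l−1}; and (p_l·I−A)·Φx(l,m_l) − B·Φu(l,m_l) = 0 for every l ∈ {1,…,K}. -/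
open scoped BigOperators

open Filter Topology in
/-- Uniqueness of partial fraction coefficients at the pole `p l`. -/
theorem pf_unique_aux {E : Type*} [AddCommGroup E] [Module ℂ E] [TopologicalSpace E]
    [ContinuousSMul ℂ E] [IsTopologicalAddGroup E] [T2Space E] {K : ℕ}
    (p : Fin K → ℂ) (hp : Function.Injective p) (mult : Fin K → ℕ)
    (c0 : E) (c : Fin K → ℕ → E)
    (h : ∀ s : ℂ, s ∉ Set.range p →
      c0 + ∑ l, ∑ j ∈ Finset.Icc 1 (mult l), ((s - p l) ^ j)⁻¹ • c l j = 0)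
    (l : Fin K) (J : ℕ) (hJ : J ∈ Finset.Icc 1 (mult l))
    (hz : ∀ j ∈ Finset.Icc 1 (mult l), J < j → c l j = 0) : c l J = 0 := by
  classical
  rw [Finset.mem_Icc] at hJ
  let R : ℂ → E := fun s => c0 + ∑ l' ∈ Finset.univ.erase l,
    ∑ j ∈ Finset.Icc 1 (mult l'), ((s - p l') ^ j)⁻¹ • c l' j
  let g : ℂ → E := fun s => (s - p l) ^ J • R s +
    ∑ j ∈ Finset.Icc 1 J, (s - p l) ^ (J - j) • c l j
  have hR : ContinuousAt R (p l) := by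
    refine continuousAt_const.add (tendsto_finsetSum _ fun l' hl' => ?_)
    refine tendsto_finsetSum _ fun j _ => ?_
    have hne : p l - p l' ≠ 0 :=
      sub_ne_zero.2 fun e => (Finset.ne_of_mem_erase hl') (hp e).symm
    have h1 : ContinuousAt (fun s : ℂ => ((s - p l') ^ j)⁻¹) (p l) :=
      ContinuousAt.inv₀ (by fun_prop) (pow_ne_zero _ hne)
    exact h1.smul continuousAt_const
  have hg : ContinuousAt g (p l) := by
    refine ContinuousAt.add (ContinuousAt.smul (by fun_prop) hR) ?_
    refine tendsto_finsetSum _ fun j _ => ?_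
    have h1 : ContinuousAt (fun s : ℂ => (s - p l) ^ (J - j)) (p l) := by fun_prop
    exact h1.smul continuousAt_const
  have hfin : ∀ᶠ s in 𝓝[≠] (p l), s ∉ Set.range p := by
    have : (Set.range p \ {p l})ᶜ ∈ 𝓝 (p l) :=
      ((Set.finite_range p).subset Set.sdiff_subset).isClosed.isOpen_compl.mem_nhds (by simp)
    filter_upwards [mem_nhdsWithin_of_mem_nhds this, self_mem_nhdsWithin] with s h1 h2 h3
    exact h1 ⟨h3, h2⟩
  have hgz : ∀ᶠ s in 𝓝[≠] (p l), g s = 0 := by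
    filter_upwards [hfin] with s hs
    have hne : s - p l ≠ 0 := sub_ne_zero.2 fun e => hs ⟨l, e.symm⟩
    have h0 := h s hs
    rw [← Finset.add_sum_erase _ _ (Finset.mem_univ l)] at h0
    have h1 : ∑ j ∈ Finset.Icc 1 (mult l), ((s - p l) ^ j)⁻¹ • c l j
        = ∑ j ∈ Finset.Icc 1 J, ((s - p l) ^ j)⁻¹ • c l j := by
      symm
      apply Finset.sum_subset (Finset.Icc_subset_Icc_right hJ.2)
      intro j hj hj'
      rw [hz j hj, smul_zero]
      simp only [Finset.mem_Icc] at hj hj'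
      omega
    have h2 : ∑ j ∈ Finset.Icc 1 J, (s - p l) ^ (J - j) • c l j
        = (s - p l) ^ J • ∑ j ∈ Finset.Icc 1 J, ((s - p l) ^ j)⁻¹ • c l j := by
      rw [Finset.smul_sum]
      refine Finset.sum_congr rfl fun j hj => ?_
      rw [smul_smul, pow_sub₀ _ hne (Finset.mem_Icc.1 hj).2]
    change (s - p l) ^ J • R s + _ = 0
    rw [h2, ← smul_add, ← h1]
    have h3 : R s + ∑ j ∈ Finset.Icc 1 (mult l), ((s - p l) ^ j)⁻¹ • c l j = 0 := by
      rw [← h0]; simp only [R]; abel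
    rw [h3, smul_zero]
  have hlim : g (p l) = 0 := by
    have t1 : Tendsto g (𝓝[≠] (p l)) (𝓝 (g (p l))) := hg.tendsto.mono_left nhdsWithin_le_nhds
    have t2 : Tendsto g (𝓝[≠] (p l)) (𝓝 0) :=
      tendsto_const_nhds.congr' (hgz.mono fun s hs => hs.symm)
    exact tendsto_nhds_unique t1 t2
  have hval : g (p l) = c l J := by
    simp only [g, sub_self]
    rw [zero_pow (by omega), zero_smul, zero_add, Finset.sum_eq_single J]
    · simp
    · intro j hj hne
      rw [Finset.mem_Icc] at hj
      rw [zero_pow (by omega), zero_smul]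
    · intro hn
      exact absurd (Finset.mem_Icc.2 ⟨hJ.1, le_rfl⟩) hn
  rw [← hval, hlim]

/-- Uniqueness of partial fraction expansions. -/
theorem pf_unique {E : Type*} [AddCommGroup E] [Module ℂ E] [TopologicalSpace E]
    [ContinuousSMul ℂ E] [IsTopologicalAddGroup E] [T2Space E] {K : ℕ}
    (p : Fin K → ℂ) (hp : Function.Injective p) (mult : Fin K → ℕ)
    (c0 : E) (c : Fin K → ℕ → E)
    (h : ∀ s : ℂ, s ∉ Set.range p →
      c0 + ∑ l, ∑ j ∈ Finset.Icc 1 (mult l), ((s - p l) ^ j)⁻¹ • c l j = 0) :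
    c0 = 0 ∧ ∀ l, ∀ j ∈ Finset.Icc 1 (mult l), c l j = 0 := by
  have key : ∀ l, ∀ j ∈ Finset.Icc 1 (mult l), c l j = 0 := by
    intro l
    have : ∀ d j, mult l - j ≤ d → j ∈ Finset.Icc 1 (mult l) → c l j = 0 := by
      intro d
      induction d with
      | zero =>
        intro j hd hj
        refine pf_unique_aux p hp mult c0 c h l j hj fun j' hj' hlt => ?_
        simp only [Finset.mem_Icc] at hj hj'
        omega
      | succ d ih =>
        intro j hd hj
        refine pf_unique_aux p hp mult c0 c h l j hj fun j' hj' hlt => ih j' ?_ hj'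
        simp only [Finset.mem_Icc] at hj hj'
        omega
    exact fun j hj => this _ j le_rfl hj
  refine ⟨?_, key⟩
  obtain ⟨s, hs⟩ := (Set.finite_range p).infinite_compl.nonempty
  have h0 := h s hs
  rwa [Finset.sum_eq_zero, add_zero] at h0
  intro l _
  exact Finset.sum_eq_zero fun j hj => by rw [key l j hj, smul_zero]

theorem pf_telescope {n m : ℕ} (A : Matrix (Fin n) (Fin n) ℂ) (B : Matrix (Fin n) (Fin m) ℂ)
    (X : ℕ → Matrix (Fin n) (Fin n) ℂ) (U : ℕ → Matrix (Fin m) (Fin n) ℂ)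
    (s q : ℂ) (hs : s - q ≠ 0) (M : ℕ) :
    (s • (1 : Matrix (Fin n) (Fin n) ℂ) - A) * (∑ j ∈ Finset.Icc 1 M, ((s - q) ^ j)⁻¹ • X j)
      - B * (∑ j ∈ Finset.Icc 1 M, ((s - q) ^ j)⁻¹ • U j)
    = X 1 + ∑ j ∈ Finset.Icc 1 M, ((s - q) ^ j)⁻¹ •
        (X (j + 1) + (q • (1 : Matrix (Fin n) (Fin n) ℂ) - A) * X j - B * U j)
      - ((s - q) ^ M)⁻¹ • X (M + 1) := by
  induction M with
  | zero => simp
  | succ M ih =>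
    rw [Finset.sum_Icc_succ_top (by omega), Finset.sum_Icc_succ_top (by omega),
      Finset.sum_Icc_succ_top (by omega), mul_add, Matrix.mul_add, add_sub_add_comm, ih]
    have e : ((s - q) ^ M)⁻¹ = ((s - q) ^ (M + 1))⁻¹ * (s - q) := by
      field_simp
      ring
    rw [e]
    simp only [Matrix.mul_smul, sub_mul, smul_mul_assoc, one_mul]
    module

/-- SLS feasibility constraint in partial-fraction coefficient form (general multiplicities). -/
theorem sls_coefficient_constraints_general {n m K : ℕ}
    (p : Fin K → ℂ) (hp : Function.Injective p)
    (mult : Fin K → ℕ) (hmult : ∀ l, 1 ≤ mult l)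
    (A : Matrix (Fin n) (Fin n) ℂ) (B : Matrix (Fin n) (Fin m) ℂ)
    (Φx : Fin K → ℕ → Matrix (Fin n) (Fin n) ℂ)
    (Φu : Fin K → ℕ → Matrix (Fin m) (Fin n) ℂ) :
    (∀ s : ℂ, s ∉ Set.range p →
        (s • (1 : Matrix (Fin n) (Fin n) ℂ) - A) *
            (∑ l, ∑ j ∈ Finset.Icc 1 (mult l), ((s - p l) ^ j)⁻¹ • Φx l j) -
          B * (∑ l, ∑ j ∈ Finset.Icc 1 (mult l), ((s - p l) ^ j)⁻¹ • Φu l j) = 1) ↔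
      ((∑ l, Φx l 1) = 1 ∧
        (∀ l, ∀ j ∈ Finset.Icc 1 (mult l - 1),
          Φx l (j + 1) + (p l • (1 : Matrix (Fin n) (Fin n) ℂ) - A) * Φx l j
            - B * Φu l j = 0) ∧
        (∀ l, (p l • (1 : Matrix (Fin n) (Fin n) ℂ) - A) * Φx l (mult l)
            - B * Φu l (mult l) = 0)) := by
  let X : Fin K → ℕ → Matrix (Fin n) (Fin n) ℂ := fun l j => if j ≤ mult l then Φx l j else 0
  have hX : ∀ l j, j ≤ mult l → X l j = Φx l j := fun l j h => if_pos h
  have hX' : ∀ l, X l (mult l + 1) = 0 := fun l => if_neg (by omega)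
  let C : Fin K → ℕ → Matrix (Fin n) (Fin n) ℂ := fun l j =>
    X l (j + 1) + (p l • (1 : Matrix (Fin n) (Fin n) ℂ) - A) * X l j - B * Φu l j
  have hid : ∀ s : ℂ, s ∉ Set.range p →
      (s • (1 : Matrix (Fin n) (Fin n) ℂ) - A) *
            (∑ l, ∑ j ∈ Finset.Icc 1 (mult l), ((s - p l) ^ j)⁻¹ • Φx l j) -
          B * (∑ l, ∑ j ∈ Finset.Icc 1 (mult l), ((s - p l) ^ j)⁻¹ • Φu l j)
      = (∑ l, Φx l 1) + ∑ l, ∑ j ∈ Finset.Icc 1 (mult l), ((s - p l) ^ j)⁻¹ • C l j := by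
    intro s hs
    rw [Finset.mul_sum, Matrix.mul_sum, ← Finset.sum_sub_distrib, ← Finset.sum_add_distrib]
    refine Finset.sum_congr rfl fun l _ => ?_
    have hne : s - p l ≠ 0 := sub_ne_zero.2 fun e => hs ⟨l, e.symm⟩
    have ht := pf_telescope A B (X l) (Φu l) s (p l) hne (mult l)
    rw [hX', smul_zero, sub_zero, hX l 1 (hmult l)] at ht
    rw [← ht]
    congr 2
    refine Finset.sum_congr rfl fun j hj => ?_
    rw [hX l j (Finset.mem_Icc.1 hj).2]
  have hC : (∀ l, ∀ j ∈ Finset.Icc 1 (mult l), C l j = 0) ↔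
      ((∀ l, ∀ j ∈ Finset.Icc 1 (mult l - 1),
          Φx l (j + 1) + (p l • (1 : Matrix (Fin n) (Fin n) ℂ) - A) * Φx l j
            - B * Φu l j = 0) ∧
        (∀ l, (p l • (1 : Matrix (Fin n) (Fin n) ℂ) - A) * Φx l (mult l)
            - B * Φu l (mult l) = 0)) := by
    have hlt : ∀ l j, j + 1 ≤ mult l → C l j = Φx l (j + 1) +
        (p l • (1 : Matrix (Fin n) (Fin n) ℂ) - A) * Φx l j - B * Φu l j := by
      intro l j hj
      simp only [C]
      rw [hX l _ hj, hX l j (by omega)]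
    have heq : ∀ l, C l (mult l) =
        (p l • (1 : Matrix (Fin n) (Fin n) ℂ) - A) * Φx l (mult l) - B * Φu l (mult l) := by
      intro l
      simp only [C]
      rw [hX', hX l _ le_rfl, zero_add]
    constructor
    · intro h
      refine ⟨fun l j hj => ?_, fun l => ?_⟩
      · rw [Finset.mem_Icc] at hj
        rw [← hlt l j (by omega)]
        exact h l j (Finset.mem_Icc.2 (by omega))
      · rw [← heq]
        exact h l _ (Finset.mem_Icc.2 ⟨hmult l, le_rfl⟩)
    · rintro ⟨h1, h2⟩ l j hj
      rw [Finset.mem_Icc] at hj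
      rcases hj.2.eq_or_lt with e | e
      · rw [e, heq, h2]
      · rw [hlt l j e]
        exact h1 l j (Finset.mem_Icc.2 (by omega))
  rw [← hC]
  constructor
  · intro h
    have hu := pf_unique p hp mult ((∑ l, Φx l 1) - 1) C (fun s hs => by
      have h1 := h s hs
      rw [hid s hs] at h1
      rw [sub_add_eq_add_sub, h1, sub_self])
    exact ⟨sub_eq_zero.1 hu.1, hu.2⟩
  · rintro ⟨h1, h2⟩ s hs
    rw [hid s hs, h1, Finset.sum_eq_zero, add_zero]
    intro l _
    exact Finset.sum_eq_zero fun j hj => by rw [h2 l j hj, smul_zero]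
end

section
/- Let p_1, …, p_K be distinct complex numbers, A an n×n complex matrix, B an n×m complex matrix, and let Φx(l) be n×n complex matrices and Φu(l) be m×n complex matrices for 1 ≤ l ≤ K. Define Φx(s) = Σ_{l=1}^K Φx(l)/(s−p_l) and Φu(s) = Σ_{l=1}^K Φu(l)/(s−p_l). Then (sI−A)·Φx(s) − B·Φu(s) = I holds for every s ∈ ℂ with s ∉ {p_1,…,p_K} if and only if Σ_{l=1}^K Φx(l) = I and B·Φu(l) = (p_l·I−A)·Φx(l) for every l ∈ {1,…,K}. -/
open scoped BigOperators

open Polynomial in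
lemma scalar_pf {K : ℕ} (p : Fin K → ℂ) (hp : Function.Injective p) (c : ℂ) (r : Fin K → ℂ)
    (h : ∀ s : ℂ, s ∉ Set.range p → c + ∑ l, (s - p l)⁻¹ * r l = 0) :
    c = 0 ∧ ∀ l, r l = 0 := by
  have hinf : (Set.range p)ᶜ.Infinite := (Set.finite_range p).infinite_compl
  have key : ∀ l, r l = 0 := by
    let P : ℂ[X] := C c * ∏ j, (X - C (p j)) +
      ∑ l, C (r l) * ∏ j ∈ Finset.univ.erase l, (X - C (p j))
    have hP : P = 0 := by
      apply Polynomial.eq_zero_of_infinite_isRoot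
      refine hinf.mono ?_
      intro s hs
      have hne : ∀ j, s - p j ≠ 0 := fun j hj => hs ⟨j, (sub_eq_zero.mp hj).symm⟩
      have e : P.eval s = (c + ∑ l, (s - p l)⁻¹ * r l) * ∏ j, (s - p j) := by
        simp only [P, eval_add, eval_mul, eval_C, eval_prod, eval_sub, eval_X, eval_finsetSum]
        rw [add_mul, Finset.sum_mul]
        congr 1
        refine Finset.sum_congr rfl fun l _ => ?_
        rw [← Finset.mul_prod_erase Finset.univ (fun j => s - p j) (Finset.mem_univ l)]
        have := hne l
        field_simp
      show P.eval s = 0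
      rw [e, h s hs, zero_mul]
    intro l
    have e : P.eval (p l) = r l * ∏ j ∈ Finset.univ.erase l, (p l - p j) := by
      simp only [P, eval_add, eval_mul, eval_C, eval_prod, eval_sub, eval_X, eval_finsetSum]
      rw [Finset.prod_eq_zero (Finset.mem_univ l) (sub_self _), mul_zero, zero_add]
      refine Finset.sum_eq_single l (fun k _ hk => ?_) (by simp)
      rw [Finset.prod_eq_zero (i := l) (by simp [hk.symm]) (sub_self _), mul_zero]
    rw [hP, eval_zero] at e
    refine (mul_eq_zero.mp e.symm).resolve_right (Finset.prod_ne_zero_iff.mpr fun j hj => ?_)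
    exact sub_ne_zero.mpr fun hh => (Finset.ne_of_mem_erase hj) (hp hh).symm
  refine ⟨?_, key⟩
  obtain ⟨s, hs⟩ := hinf.nonempty
  simpa [key] using h s hs

/-- SLS feasibility constraint in partial-fraction coefficient form (simple poles). -/
theorem sls_coefficient_constraints_simple {n m K : ℕ}
    (p : Fin K → ℂ) (hp : Function.Injective p)
    (A : Matrix (Fin n) (Fin n) ℂ) (B : Matrix (Fin n) (Fin m) ℂ)
    (Φx : Fin K → Matrix (Fin n) (Fin n) ℂ)
    (Φu : Fin K → Matrix (Fin m) (Fin n) ℂ) :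
    (∀ s : ℂ, s ∉ Set.range p →
        (s • (1 : Matrix (Fin n) (Fin n) ℂ) - A) * (∑ l, (s - p l)⁻¹ • Φx l) -
          B * (∑ l, (s - p l)⁻¹ • Φu l) = 1) ↔
      ((∑ l, Φx l) = 1 ∧
        ∀ l, B * Φu l = (p l • (1 : Matrix (Fin n) (Fin n) ℂ) - A) * Φx l) := by
  have e : ∀ s : ℂ, s ∉ Set.range p →
      (s • (1 : Matrix (Fin n) (Fin n) ℂ) - A) * (∑ l, (s - p l)⁻¹ • Φx l) -
          B * (∑ l, (s - p l)⁻¹ • Φu l) = (∑ l, Φx l) +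
        ∑ l, (s - p l)⁻¹ • ((p l • (1 : Matrix (Fin n) (Fin n) ℂ) - A) * Φx l - B * Φu l) := by
    intro s hs
    rw [Matrix.mul_sum, Matrix.mul_sum, ← Finset.sum_sub_distrib, ← Finset.sum_add_distrib]
    refine Finset.sum_congr rfl fun l _ => ?_
    have hne : s - p l ≠ 0 := fun hj => hs ⟨l, (sub_eq_zero.mp hj).symm⟩
    have h1 : Φx l = (s - p l)⁻¹ • ((s - p l) • Φx l) := by
      rw [smul_smul, inv_mul_cancel₀ hne, one_smul]
    rw [Matrix.mul_smul, Matrix.mul_smul, ← smul_sub]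
    have h3 : ∀ R : Matrix (Fin n) (Fin n) ℂ,
        Φx l + (s - p l)⁻¹ • R = (s - p l)⁻¹ • ((s - p l) • Φx l + R) := by
      intro R
      rw [smul_add, ← h1]
    rw [h3]
    congr 1
    simp only [sub_mul, sub_smul, Matrix.smul_mul, Matrix.one_mul]
    abel
  constructor
  · intro h
    have hs : ∀ i j, ((∑ l, Φx l) - 1) i j = 0 ∧ ∀ l,
        ((p l • (1 : Matrix (Fin n) (Fin n) ℂ) - A) * Φx l - B * Φu l) i j = 0 := by
      intro i j
      refine scalar_pf p hp _ _ fun s hs => ?_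
      have h2 := congrFun (congrFun ((e s hs).symm.trans (h s hs)) i) j
      rw [Matrix.add_apply, Matrix.sum_apply i j Finset.univ (fun l => (s - p l)⁻¹ • _)] at h2
      simp only [Matrix.smul_apply, smul_eq_mul] at h2
      rw [Matrix.sub_apply, ← h2]
      ring
    refine ⟨sub_eq_zero.mp (Matrix.ext fun i j => (hs i j).1), fun l => ?_⟩
    exact (sub_eq_zero.mp (Matrix.ext fun i j => (hs i j).2 l)).symm
  · rintro ⟨h1, h2⟩ s hs
    rw [e s hs, h1]
    simp [h2]
end

section
/- Let s ∈ ℂ, let A be an n×n complex matrix, B an n×m complex matrix, X an invertible n×n complex matrix and U an m×n complex matrix such that (sI − A)·X − B·U = I. Then the matrix sI − A − B·U·X⁻¹ is invertible with inverse X; consequently, for every w ∈ ℂⁿ, the vectors x := X·w and u := U·w satisfy s·x = A·x + B·u + w and u = (U·X⁻¹)·x. That is, the controller K := U·X⁻¹ achieves the closed-loop responses x = X·w and u = U·w. -/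
/-- If `(X, U)` satisfies the SLS constraint `(sI−A)X − BU = I` with `X`
invertible, then `K = U·X⁻¹` makes `sI − A − BK` invertible with inverse `X`,
and achieves the closed-loop responses `x = Xw`, `u = Uw`. -/
theorem controller_achieves_response {n m : ℕ} (s : ℂ)
    (A : Matrix (Fin n) (Fin n) ℂ) (B : Matrix (Fin n) (Fin m) ℂ)
    (X : Matrix (Fin n) (Fin n) ℂ) (U : Matrix (Fin m) (Fin n) ℂ)
    (hX : IsUnit X.det)
    (h : (s • (1 : Matrix (Fin n) (Fin n) ℂ) - A) * X - B * U = 1) :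
    IsUnit (s • (1 : Matrix (Fin n) (Fin n) ℂ) - A - B * (U * X⁻¹)).det ∧
      (s • (1 : Matrix (Fin n) (Fin n) ℂ) - A - B * (U * X⁻¹))⁻¹ = X ∧
      ∀ w : Fin n → ℂ,
        s • X.mulVec w = A.mulVec (X.mulVec w) + B.mulVec (U.mulVec w) + w ∧
        U.mulVec w = (U * X⁻¹).mulVec (X.mulVec w) := by
  have hU : U * X⁻¹ * X = U := by
    rw [Matrix.mul_assoc, Matrix.nonsing_inv_mul X hX, Matrix.mul_one]
  have key : (s • (1 : Matrix (Fin n) (Fin n) ℂ) - A - B * (U * X⁻¹)) * X = 1 := by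
    rw [Matrix.sub_mul _ (B * (U * X⁻¹)), Matrix.mul_assoc B, hU, h]
  refine ⟨Matrix.isUnit_det_of_right_inverse key, Matrix.inv_eq_right_inv key, fun w => ⟨?_, ?_⟩⟩
  · have h2 := congrArg (fun M => Matrix.mulVec M w) h
    simp only [Matrix.sub_mulVec, Matrix.sub_mul, Matrix.smul_mul, Matrix.one_mul,
      Matrix.smul_mulVec, Matrix.one_mulVec] at h2
    rw [Matrix.mulVec_mulVec, Matrix.mulVec_mulVec]
    rw [sub_sub, sub_eq_iff_eq_add] at h2
    rw [h2, add_comm]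
  · rw [Matrix.mulVec_mulVec, hU]
end
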